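/- Let G act on a set Y such that the action is 3-sharp. Let a ∈ G have order 3 and let y₀ ∈ Y be such that y₀, a • y₀, a² • y₀ are pairwise distinct, and suppose there exists t ∈ G with t • y₀ = y₀, t • (a • y₀) = a² • y₀ and t • (a² • y₀) = a • y₀. Assume: (i) every element of order 3 in G is conjugate to a; (ii) for every triple (x, y, z) of pairwise distinct points of Y there exists g ∈ G with g • x = y, g • y = z and g • z = x; (iii) for every subset S ⊆ Y with exactly 3 elements satisfying a • S = S there exists g ∈ G with g • {y₀, a • y₀, a² • y₀} = S. Then the action of G on Y is sharply 3-transitive. -/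

import Mathlib

open Pointwise

/-- An action is 3-sharp if every element fixing three pairwise distinct points is trivial. -/
def ThreeSharp (G Y : Type*) [Group G] [MulAction G Y] : Prop :=
  ∀ g : G, ∀ x y z : Y, x ≠ y → x ≠ z → y ≠ z →
    g • x = x → g • y = y → g • z = z → g = 1

/-- An action is sharply 3-transitive if any triple of pairwise distinct points is taken
to any other such triple by a unique group element. -/
def SharplyThreeTransitive (G Y : Type*) [Group G] [MulAction G Y] : Prop :=
  ∀ x y z x' y' z' : Y, x ≠ y → x ≠ z → y ≠ z → x' ≠ y' → x' ≠ z' → y' ≠ z' →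
    ∃! g : G, g • x = x' ∧ g • y = y' ∧ g • z = z'

/-!
The permutations of a triple of points that group elements realise form a subgroup of `S₃`. For
the base triple `(y₀, a • y₀, a² • y₀)` this subgroup contains a 3-cycle (from `a`) and a
transposition (from `t`), so it is everything, and it is enough to move the base triple onto any
other one as a set. A group element cycling the points of a given triple has order 3 by sharpness,
hence is conjugate to `a`; the conjugating element carries the triple to an `a`-invariant set, which
is a translate of the base triple by assumption.
-/

open Equiv Function MulAction

theorem injective_vec_three {α : Type*} {x y z : α} (hxy : x ≠ y) (hxz : x ≠ z) (hyz : y ≠ z) :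
    Injective ![x, y, z] := by
  simp [Injective, Fin.forall_fin_succ, hxy, hxz, hyz, hxy.symm, hxz.symm, hyz.symm]

theorem exists_eq_comp_perm_of_range_eq {ι α : Type*} {f f' : ι → α} (hf : Injective f)
    (hf' : Injective f') (h : Set.range f = Set.range f') : ∃ σ : Perm ι, f' = f ∘ σ := by
  refine ⟨(Equiv.ofInjective f' hf').trans
    ((Equiv.setCongr h.symm).trans (Equiv.ofInjective f hf).symm), funext fun i ↦ ?_⟩
  simp [Equiv.apply_ofInjective_symm]

theorem pow_smul_eq_comp_pow {M Y ι : Type*} [Monoid M] [MulAction M Y] {f : ι → Y} {g : M}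
    {σ : Perm ι} (h : g • f = f ∘ σ) (n : ℕ) : g ^ n • f = f ∘ ⇑(σ ^ n) := by
  induction n with
  | zero => simp
  | succ n ih =>
    calc g ^ (n + 1) • f = g ^ n • (f ∘ σ) := by rw [pow_succ, mul_smul, h]
      _ = (g ^ n • f) ∘ σ := rfl
      _ = f ∘ ⇑(σ ^ (n + 1)) := by rw [ih, comp_assoc, ← Perm.coe_mul, ← pow_succ]

theorem smul_range_eq_of_smul_eq_comp {M Y ι : Type*} [SMul M Y] {f : ι → Y} {g : M}
    {σ : Perm ι} (h : g • f = f ∘ σ) : g • Set.range f = Set.range f := by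
  calc g • Set.range f = Set.range (g • f) := Set.smul_set_range g f
    _ = Set.range f := by rw [h, EquivLike.range_comp]

theorem smul_eq_comp_finRotate_three {M Y : Type*} [SMul M Y] {f : Fin 3 → Y} {g : M}
    (h₀ : g • f 0 = f 1) (h₁ : g • f 1 = f 2) (h₂ : g • f 2 = f 0) :
    g • f = f ∘ finRotate 3 := by
  ext i
  fin_cases i
  exacts [h₀, h₁, h₂]

section

variable {G Y ι : Type*} [Group G] [MulAction G Y] {f : ι → Y}

theorem injective_smul_of_stabilizer_eq_bot {y : Y} (hy : stabilizer G y = ⊥) :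
    Injective fun g : G ↦ g • y := by
  intro g h (hgh : g • y = h • y)
  have hmem : g⁻¹ * h ∈ stabilizer G y := by
    rw [mem_stabilizer_iff, mul_smul, ← hgh, inv_smul_smul]
  rw [hy, Subgroup.mem_bot] at hmem
  exact inv_mul_eq_one.1 hmem

theorem orderOf_eq_of_smul_eq_comp (hf : Injective f) (hstab : stabilizer G f = ⊥) {g : G}
    {σ : Perm ι} (h : g • f = f ∘ σ) : orderOf g = orderOf σ := by
  refine orderOf_eq_orderOf_iff.2 fun n ↦ ?_
  calc g ^ n = 1 ↔ g ^ n • f = f := by rw [← Subgroup.mem_bot, ← hstab, mem_stabilizer_iff]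
    _ ↔ f ∘ ⇑(σ ^ n) = f ∘ id := by rw [pow_smul_eq_comp_pow h, comp_id]
    _ ↔ σ ^ n = 1 := by rw [hf.comp_left.eq_iff, ← Perm.coe_one, DFunLike.coe_fn_eq]

variable (G f) in
/-- The permutations of the index type `ι` that are realised on the family `f` by elements
of `G`. For injective `f` this is the group that the setwise stabilizer of the range of `f` induces
on that range; working with indices lets generation results for `Equiv.Perm ι` apply directly. -/
def inducedPerms : Subgroup (Perm ι) where
  carrier := {σ | ∃ g : G, g • f = f ∘ σ}
  one_mem' := ⟨1, one_smul G f⟩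
  mul_mem' := by
    rintro σ τ ⟨g, hg⟩ ⟨h, hh⟩
    refine ⟨g * h, ?_⟩
    calc (g * h) • f = (g • f) ∘ τ := by rw [mul_smul, hh]; rfl
      _ = f ∘ ⇑(σ * τ) := by rw [hg, comp_assoc, Perm.coe_mul]
  inv_mem' := by
    rintro σ ⟨g, hg⟩
    refine ⟨g⁻¹, inv_smul_eq_iff.2 ?_⟩
    calc f = (g • f) ∘ ⇑σ⁻¹ := by rw [hg, comp_assoc, ← Perm.coe_mul, mul_inv_cancel]; rfl
      _ = g • (f ∘ ⇑σ⁻¹) := rfl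

theorem exists_smul_eq_of_smul_range_eq {f' : ι → Y} (hf : Injective f) (hf' : Injective f')
    (htop : inducedPerms G f = ⊤) {g : G} (h : g • Set.range f = Set.range f') :
    ∃ k : G, k • f = f' := by
  have hgf : Injective (g • f) := (MulAction.injective g).comp hf
  obtain ⟨σ, rfl⟩ := exists_eq_comp_perm_of_range_eq hgf hf' ((Set.smul_set_range g f).symm.trans h)
  obtain ⟨k, hk⟩ : σ ∈ inducedPerms G f := htop ▸ Subgroup.mem_top σ
  exact ⟨g * k, by rw [mul_smul, hk]; rfl⟩

theorem inducedPerms_eq_top [Fintype ι] [DecidableEq ι] (hι : (Fintype.card ι).Prime)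
    {σ τ : Perm ι} (hσ : σ.IsCycle) (hsupp : σ.support = Finset.univ) (hτ : τ.IsSwap)
    (hσf : σ ∈ inducedPerms G f) (hτf : τ ∈ inducedPerms G f) : inducedPerms G f = ⊤ := by
  rw [eq_top_iff, ← Perm.closure_prime_cycle_swap hι hσ hsupp hτ, Subgroup.closure_le]
  exact Set.pair_subset hσf hτf

theorem exists_smul_eq_of_isConj {n : ℕ} {a b : G} {S₀ T : Set Y}
    (ha : ∀ S : Set Y, S.ncard = n → a • S = S → ∃ g : G, g • S₀ = S) (hab : IsConj a b)
    (hT : T.ncard = n) (hbT : b • T = T) : ∃ g : G, g • S₀ = T := by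
  obtain ⟨c, rfl⟩ := isConj_iff.1 hab
  have hinv : a • c⁻¹ • T = c⁻¹ • T := by
    rwa [mul_smul, mul_smul, ← eq_inv_smul_iff] at hbT
  obtain ⟨g, hg⟩ := ha (c⁻¹ • T) (by rw [Set.ncard_smul_set, hT]) hinv
  exact ⟨c * g, by rw [mul_smul, hg, smul_inv_smul]⟩

end

namespace ThreeSharp

variable {G Y : Type*} [Group G] [MulAction G Y]

theorem stabilizer_eq_bot (hG : ThreeSharp G Y) {f : Fin 3 → Y} (hf : Injective f) :
    stabilizer G f = ⊥ := by
  refine (Subgroup.eq_bot_iff_forall _).2 fun g hg ↦ ?_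
  have hfix (i : Fin 3) : g • f i = f i := congrFun (mem_stabilizer_iff.1 hg) i
  exact hG g (f 0) (f 1) (f 2) (hf.ne (by decide)) (hf.ne (by decide)) (hf.ne (by decide))
    (hfix 0) (hfix 1) (hfix 2)

theorem orderOf_eq_three (hG : ThreeSharp G Y) {f : Fin 3 → Y} (hf : Injective f) {g : G}
    (hg : g • f = f ∘ finRotate 3) : orderOf g = 3 := by
  have hcycle : (finRotate 3).IsThreeCycle := cycleType_finRotate
  rw [orderOf_eq_of_smul_eq_comp hf (hG.stabilizer_eq_bot hf) hg, hcycle.orderOf]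

theorem sharplyThreeTransitive_of_forall_exists_smul_eq (hG : ThreeSharp G Y) (e : Fin 3 → Y)
    (he : ∀ f : Fin 3 → Y, Injective f → ∃ g : G, g • e = f) : SharplyThreeTransitive G Y := by
  intro x y z x' y' z' hxy hxz hyz hxy' hxz' hyz'
  have hf : Injective ![x, y, z] := injective_vec_three hxy hxz hyz
  obtain ⟨g, hg⟩ := he _ hf
  obtain ⟨g', hg'⟩ := he _ (injective_vec_three hxy' hxz' hyz')
  have hmaps (k : G) :
      k • ![x, y, z] = ![x', y', z'] ↔ k • x = x' ∧ k • y = y' ∧ k • z = z' := by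
    simp [funext_iff, Fin.forall_fin_succ]
  simp only [← hmaps]
  have hmap : (g' * g⁻¹) • ![x, y, z] = ![x', y', z'] := by
    rw [mul_smul, ← hg, inv_smul_smul, hg']
  exact ⟨g' * g⁻¹, hmap, fun k hk ↦
    injective_smul_of_stabilizer_eq_bot (hG.stabilizer_eq_bot hf) (hk.trans hmap.symm)⟩

end ThreeSharp

theorem sharplyThreeTransitive_of_connected {G Y : Type*} [Group G] [MulAction G Y]
    (hG : ThreeSharp G Y)
    (a : G) (ha : orderOf a = 3) (y₀ : Y)
    (h₁ : y₀ ≠ a • y₀) (h₂ : y₀ ≠ a ^ 2 • y₀) (h₃ : a • y₀ ≠ a ^ 2 • y₀)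
    (t : G) (ht₀ : t • y₀ = y₀) (ht₁ : t • (a • y₀) = a ^ 2 • y₀)
    (ht₂ : t • (a ^ 2 • y₀) = a • y₀)
    (hconj : ∀ g : G, orderOf g = 3 → IsConj a g)
    (hshift : ∀ x y z : Y, x ≠ y → x ≠ z → y ≠ z →
      ∃ g : G, g • x = y ∧ g • y = z ∧ g • z = x)
    (hconn : ∀ S : Set Y, S.ncard = 3 → a • S = S →
      ∃ g : G, g • ({y₀, a • y₀, a ^ 2 • y₀} : Set Y) = S) :
    SharplyThreeTransitive G Y := by
  let e : Fin 3 → Y := ![y₀, a • y₀, a ^ 2 • y₀]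
  have he : Injective e := injective_vec_three h₁ h₂ h₃
  have hrange : Set.range e = {y₀, a • y₀, a ^ 2 • y₀} := by
    simp only [e, Matrix.range_cons, Matrix.range_empty, Set.union_empty, Set.singleton_union]
  have hrot : finRotate 3 ∈ inducedPerms G e :=
    ⟨a, smul_eq_comp_finRotate_three rfl (by simp [e, smul_smul, sq])
      (by simp [e, smul_smul, ← pow_succ', orderOf_dvd_iff_pow_eq_one.1 ha.dvd])⟩
  have hswap : swap 1 2 ∈ inducedPerms G e :=
    ⟨t, by ext i; fin_cases i; exacts [ht₀, ht₁, ht₂]⟩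
  have htop : inducedPerms G e = ⊤ :=
    inducedPerms_eq_top Nat.prime_three isCycle_finRotate support_finRotate
      ⟨1, 2, by decide, rfl⟩ hrot hswap
  refine hG.sharplyThreeTransitive_of_forall_exists_smul_eq e fun f hf ↦ ?_
  obtain ⟨b, hb₀, hb₁, hb₂⟩ := hshift (f 0) (f 1) (f 2)
    (hf.ne (by decide)) (hf.ne (by decide)) (hf.ne (by decide))
  have hb : b • f = f ∘ finRotate 3 := smul_eq_comp_finRotate_three hb₀ hb₁ hb₂
  obtain ⟨g, hg⟩ := exists_smul_eq_of_isConj hconn (hconj b (hG.orderOf_eq_three hf hb))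
    (by rw [Set.ncard_range_of_injective hf, Nat.card_fin]) (smul_range_eq_of_smul_eq_comp hb)
  exact exists_smul_eq_of_smul_range_eq he hf htop (hrange ▸ hg)
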